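/- arXiv:1002.0047 — 7 statements merged into one kernel-verified Lean document; each statement's English description precedes it below -/
import Mathlib

section
/- Let G be a group acting by automorphisms on an abelian group A, and let H = A ⋊ G be the semidirect product with multiplication (a,g)(a',g') = (a + g·a', gg'). Let T be the circle group, let Â = Hom(A, T) be the character group with G-action (g·χ)(a) = χ(g⁻¹·a). Let m₀ : G × G → T be a normalized 2-cocycle (i.e. m₀(g₁,g₂)·m₀(g₁g₂,g₃) = m₀(g₂,g₃)·m₀(g₁,g₂g₃) and m₀(1,g) = m₀(g,1) = 1), and let θ : G → Â be a 1-cocycle (i.e. θ(gg') = θ(g)·(g·θ(g'))). Then the function m defined by m((a,g),(a',g')) = m₀(g,g')·θ(g⁻¹)(a') is a normalized 2-cocycle (multiplier) on H. -/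
/-!
The multiplier is a product of two multipliers on `N ⋊ G`: the inflation of `m₀` along the
projection to `G`, and the pairing `((n, g), (n', g')) ↦ θ(g⁻¹)(n')`. The latter is a multiplier
because the 1-cocycle identity, read at inverses, is `θ((gh)⁻¹)(n) = θ(h⁻¹)(n) · θ(g⁻¹)(h·n)`.
-/

/-- A multiplier on `H`: a normalized 2-cocycle with values in `M`, on which `H` acts trivially. -/
structure IsMultiplier {H M : Type*} [MulOneClass H] [MulOneClass M] (m : H → H → M) : Prop where
  cocycle (x y z : H) : m x y * m (x * y) z = m y z * m x (y * z)
  one_left (x : H) : m 1 x = 1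
  one_right (x : H) : m x 1 = 1

namespace IsMultiplier

variable {H K M : Type*} [MulOneClass H] [MulOneClass K]

theorem mul [CommMonoid M] {m m' : H → H → M} (hm : IsMultiplier m) (hm' : IsMultiplier m') :
    IsMultiplier fun x y => m x y * m' x y where
  cocycle x y z := by
    rw [mul_mul_mul_comm, hm.cocycle, hm'.cocycle, mul_mul_mul_comm]
  one_left x := by rw [hm.one_left, hm'.one_left, one_mul]
  one_right x := by rw [hm.one_right, hm'.one_right, one_mul]

theorem comp [MulOneClass M] {m : K → K → M} (hm : IsMultiplier m) (f : H →* K) :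
    IsMultiplier fun x y => m (f x) (f y) where
  cocycle x y z := by simpa only [map_mul] using hm.cocycle (f x) (f y) (f z)
  one_left x := by rw [map_one, hm.one_left]
  one_right x := by rw [map_one, hm.one_right]

end IsMultiplier

/-- A 1-cocycle of `G` with values in the characters `N →* M`, where `G` acts on `N` through `φ` and
on characters by `(g·χ)(n) = χ(g⁻¹·n)`; the identity `θ(gh) = θ(g)·(g·θ(h))` is stated pointwise. -/
def IsCharacterCocycle {N G M : Type*} [Group N] [Group G] [CommMonoid M]
    (φ : G →* MulAut N) (θ : G → N →* M) : Prop :=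
  ∀ (g h : G) (n : N), θ (g * h) n = θ g n * θ h (φ g⁻¹ n)

section SemidirectProduct

variable {N G M : Type*} [Group N] [Group G] [CommMonoid M] {φ : G →* MulAut N}

namespace IsCharacterCocycle

variable {θ : G → N →* M}

theorem map_one_apply (hθ : IsCharacterCocycle φ θ) (n : N) : θ 1 n = 1 := by
  have idempotent : θ 1 n = θ 1 n * θ 1 n := by
    simpa only [mul_one, inv_one, map_one, MulAut.one_apply] using hθ 1 1 n
  have isUnit : IsUnit (θ 1 n) := (Group.isUnit n).map (θ 1)
  exact isUnit.mul_eq_left.mp idempotent.symm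

theorem map_mul_inv_apply (hθ : IsCharacterCocycle φ θ) (g h : G) (n : N) :
    θ (g * h)⁻¹ n = θ h⁻¹ n * θ g⁻¹ (φ h n) := by
  rw [mul_inv_rev, hθ, inv_inv]

theorem isMultiplier_pairing (hθ : IsCharacterCocycle φ θ) :
    IsMultiplier fun x y : N ⋊[φ] G => θ x.right⁻¹ y.left where
  cocycle x y z := by
    rw [SemidirectProduct.mul_right, SemidirectProduct.mul_left, hθ.map_mul_inv_apply, map_mul,
      mul_left_comm]
  one_left x := by rw [SemidirectProduct.one_right, inv_one, hθ.map_one_apply]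
  one_right x := by rw [SemidirectProduct.one_left, map_one]

end IsCharacterCocycle

theorem stmt_1_general {m₀ : G → G → M} {θ : G → N →* M} (hm₀ : IsMultiplier m₀)
    (hθ : IsCharacterCocycle φ θ) :
    IsMultiplier fun x y : N ⋊[φ] G => m₀ x.right y.right * θ x.right⁻¹ y.left :=
  (hm₀.comp SemidirectProduct.rightHom).mul hθ.isMultiplier_pairing

end SemidirectProduct

/-- The action of `G` on the additive group `A` as an action on `Multiplicative A`: Mathlib's
semidirect product requires the normal factor to be written multiplicatively. -/
def multiplicativeAction (G A : Type*) [Group G] [AddGroup A] [DistribMulAction G A] :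
    G →* MulAut (Multiplicative A) :=
  (MulAutMultiplicative A).symm.toMonoidHom.comp (DistribMulAction.toAddAut G A)

/-- Given a normalized 2-cocycle `m₀` of `G` with values in the circle group and a 1-cocycle
`θ : G → Â` (each `θ g` a character of `A`, with `θ(gg') = θ(g)·(g·θ(g'))` where
`(g·χ)(a) = χ(g⁻¹·a)`), the function `m((a,g),(a',g')) = m₀(g,g')·θ(g⁻¹)(a')` is a
normalized 2-cocycle (multiplier) on the semidirect product `H = A ⋊ G`, whose
multiplication is `(a,g)(a',g') = (a + g·a', gg')`. -/
theorem stmt_1 {G A : Type*} [Group G] [AddCommGroup A] [DistribMulAction G A]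
    (m₀ : G → G → Circle) (θ : G → A → Circle)
    (hm₀coc : ∀ g₁ g₂ g₃ : G, m₀ g₁ g₂ * m₀ (g₁ * g₂) g₃ = m₀ g₂ g₃ * m₀ g₁ (g₂ * g₃))
    (hm₀l : ∀ g : G, m₀ 1 g = 1) (hm₀r : ∀ g : G, m₀ g 1 = 1)
    (hθchar : ∀ (g : G) (a a' : A), θ g (a + a') = θ g a * θ g a')
    (hθcoc : ∀ (g g' : G) (a : A), θ (g * g') a = θ g a * θ g' (g⁻¹ • a)) :
    ∀ (mul : A × G → A × G → A × G) (m : A × G → A × G → Circle),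
      (mul = fun x y => (x.1 + x.2 • y.1, x.2 * y.2)) →
      (m = fun x y => m₀ x.2 y.2 * θ x.2⁻¹ y.1) →
      (∀ x y z : A × G, m x y * m (mul x y) z = m y z * m x (mul y z)) ∧
        (∀ x : A × G, m ((0 : A), (1 : G)) x = 1) ∧
        (∀ x : A × G, m x ((0 : A), (1 : G)) = 1) := by
  rintro mul m rfl rfl
  let χ (g : G) : Multiplicative A →* Circle := MonoidHom.mk' (fun a => θ g a.toAdd) (hθchar g)
  have hχ : IsCharacterCocycle (multiplicativeAction G A) χ := hθcoc
  have hm := stmt_1_general ⟨hm₀coc, hm₀l, hm₀r⟩ hχ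
  let toSemidirect (x : A × G) : Multiplicative A ⋊[multiplicativeAction G A] G :=
    ⟨.ofAdd x.1, x.2⟩
  exact ⟨fun x y z => hm.cocycle (toSemidirect x) (toSemidirect y) (toSemidirect z),
    fun x => hm.one_left (toSemidirect x), fun x => hm.one_right (toSemidirect x)⟩
end

section
/- Let (V, B) be a finite-dimensional vector space over ℚ_p with a nondegenerate symmetric bilinear form B and dim V ≥ 3. If B' is an alternating bilinear form on V that is invariant under SO(V), i.e. B'(gx, gy) = B'(x, y) for all g ∈ SO(V) and x, y ∈ V, then B' = 0. -/
/-!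
In a basis `v` orthogonal for `B`, flipping the signs of two basis vectors `v i` and `v k` is an
isometry of determinant one. When `j` is different from both `i` and `k`, this isometry turns
`B' (v i) (v j)` into its opposite, so an invariant form `B'` vanishes there. In dimension at
least three such an index `k` exists for all `i ≠ j`.
-/

open LinearMap (BilinForm)
open Module (Basis)

section DiagonalEquiv

variable {ι R M : Type*} [CommRing R] [AddCommGroup M] [Module R M]

/-- The linear automorphism which is diagonal in the basis `v`, multiplying `v i` by the
unit `w i`. -/
noncomputable def diagonalEquiv (v : Basis ι R M) (w : ι → Rˣ) : M ≃ₗ[R] M :=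
  v.equiv (v.unitsSMul w) (Equiv.refl ι)

lemma diagonalEquiv_apply_basis (v : Basis ι R M) (w : ι → Rˣ) (i : ι) :
    diagonalEquiv v w (v i) = (w i : R) • v i := by
  rw [diagonalEquiv, Basis.equiv_apply, Equiv.refl_apply, Basis.unitsSMul_apply, Units.smul_def]

lemma det_diagonalEquiv [Fintype ι] (v : Basis ι R M) (w : ι → Rˣ) :
    LinearMap.det (diagonalEquiv v w).toLinearMap = ∏ i, (w i : R) := by
  classical
  rw [diagonalEquiv, Basis.det_basis, Basis.det_unitsSMul_self]

lemma isOrthogonal_diagonalEquiv_iff (B : BilinForm R M) (v : Basis ι R M) (w : ι → Rˣ) :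
    B.IsOrthogonal (diagonalEquiv v w) ↔
      ∀ i j, (w i * w j : R) * B (v i) (v j) = B (v i) (v j) := by
  have apply_basis (i j : ι) : B (diagonalEquiv v w (v i)) (diagonalEquiv v w (v j)) =
      (w i * w j : R) * B (v i) (v j) := by
    simp only [diagonalEquiv_apply_basis, map_smul, LinearMap.smul_apply, smul_eq_mul]
    ring
  refine ⟨fun h i j ↦ (apply_basis i j).symm.trans (h (v i) (v j)), fun h ↦ ?_⟩
  have compl_eq : B.compl₁₂ (diagonalEquiv v w).toLinearMap (diagonalEquiv v w).toLinearMap = B :=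
    v.ext fun i ↦ v.ext fun j ↦ (apply_basis i j).trans (h i j)
  exact LinearMap.congr_fun₂ compl_eq

lemma isOrthogonal_diagonalEquiv_of_iIsOrtho {B : BilinForm R M} {v : Basis ι R M}
    (hv : B.iIsOrtho v) {w : ι → Rˣ} (hw : ∀ i, w i * w i = 1) :
    B.IsOrthogonal (diagonalEquiv v w) := by
  refine (isOrthogonal_diagonalEquiv_iff B v w).mpr fun i j ↦ ?_
  obtain rfl | hij := eq_or_ne i j
  · rw [← Units.val_mul, hw, Units.val_one, one_mul]
  · rw [BilinForm.iIsOrtho_def.mp hv i j hij, mul_zero]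

end DiagonalEquiv

section SignFlip

variable {ι : Type*} [DecidableEq ι]

/-- The family of signs equal to `-1` at `i` and `k` and to `1` elsewhere; the corresponding
`diagonalEquiv` is the half-turn in the plane of `v i` and `v k`. For `i = k` the two signs cancel
and the family is constantly `1`. -/
def signFlip (R : Type*) [CommRing R] (i k : ι) : ι → Rˣ :=
  Pi.mulSingle i (-1) * Pi.mulSingle k (-1)

variable {R : Type*} [CommRing R]

lemma signFlip_mul_self (i k l : ι) : signFlip R i k l * signFlip R i k l = 1 := by
  have mulSingle_mul_self (m : ι) :
      (Pi.mulSingle m (-1) : ι → Rˣ) * Pi.mulSingle m (-1) = 1 := by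
    rw [← Pi.mulSingle_mul, neg_mul_neg, one_mul, Pi.mulSingle_one]
  have h : signFlip R i k * signFlip R i k = 1 := by
    rw [signFlip, mul_mul_mul_comm, mulSingle_mul_self, mulSingle_mul_self, one_mul]
  exact congrFun h l

lemma prod_signFlip [Fintype ι] (i k : ι) : ∏ l, (signFlip R i k l : R) = 1 := by
  have prod_units : ∏ l, signFlip R i k l = 1 := by
    simp [signFlip, Finset.prod_mul_distrib]
  rw [← Units.coe_prod, prod_units, Units.val_one]

lemma signFlip_apply_left {i k : ι} (hik : i ≠ k) : signFlip R i k i = -1 := by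
  simp [signFlip, hik]

lemma signFlip_apply_of_ne {i k l : ι} (hli : l ≠ i) (hlk : l ≠ k) : signFlip R i k l = 1 := by
  simp [signFlip, hli, hlk]

end SignFlip

lemma apply_basis_eq_zero_of_isOrthogonal_signFlip {ι R M : Type*} [DecidableEq ι] [CommRing R]
    [Invertible (2 : R)] [AddCommGroup M] [Module R M] {B : BilinForm R M} {v : Basis ι R M}
    {i j k : ι} (hji : j ≠ i) (hki : k ≠ i) (hkj : k ≠ j)
    (h : B.IsOrthogonal (diagonalEquiv v (signFlip R i k))) :
    B (v i) (v j) = 0 := by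
  have neg_eq_self : -B (v i) (v j) = B (v i) (v j) := by
    simpa [signFlip_apply_left hki.symm, signFlip_apply_of_ne hji hkj.symm]
      using (isOrthogonal_diagonalEquiv_iff B v _).mp h i j
  refine (isUnit_of_invertible (2 : R)).mul_right_eq_zero.mp ?_
  linear_combination -neg_eq_self

theorem stmt_5_general {K V : Type*} [Field K] [Invertible (2 : K)] [AddCommGroup V] [Module K V]
    (hdim : 3 ≤ Module.finrank K V) {B B' : BilinForm K V} (hsymm : B.IsSymm) (halt : B'.IsAlt)
    (hinv : ∀ g : V ≃ₗ[K] V, B.IsOrthogonal g → LinearMap.det g.toLinearMap = 1 →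
      B'.IsOrthogonal g) :
    B' = 0 := by
  have : FiniteDimensional K V := Module.finite_of_finrank_pos (by lia)
  obtain ⟨v, hv⟩ := BilinForm.exists_orthogonal_basis ⟨hsymm.eq⟩
  refine v.ext fun i ↦ v.ext fun j ↦ ?_
  obtain rfl | hji := eq_or_ne j i
  · exact halt (v j)
  obtain ⟨k, hki, hkj⟩ := Fin.exists_ne_and_ne_of_two_lt i j hdim
  refine apply_basis_eq_zero_of_isOrthogonal_signFlip hji hki hkj (hinv _ ?_ ?_)
  · exact isOrthogonal_diagonalEquiv_of_iIsOrtho hv (signFlip_mul_self i k)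
  · rw [det_diagonalEquiv, prod_signFlip]

/-- Over `ℚ_p`, if `B` is a nondegenerate symmetric bilinear form on a finite-dimensional
space `V` with `dim V ≥ 3`, then any alternating bilinear form `B'` on `V` invariant under
`SO(V)` vanishes. -/
theorem stmt_5 (p : ℕ) [Fact p.Prime] {V : Type*} [AddCommGroup V] [Module ℚ_[p] V]
    [FiniteDimensional ℚ_[p] V] (hdim : 3 ≤ Module.finrank ℚ_[p] V)
    (B B' : LinearMap.BilinForm ℚ_[p] V)
    (hsymm : ∀ x y, B x y = B y x)
    (hnd : ∀ x, (∀ y, B x y = 0) → x = 0)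
    (halt : ∀ x, B' x x = 0)
    (hinv : ∀ g : V ≃ₗ[ℚ_[p]] V, (∀ x y, B (g x) (g y) = B x y) →
      LinearMap.det g.toLinearMap = 1 → ∀ x y, B' (g x) (g y) = B' x y) :
    B' = 0 := by
  have : Invertible (2 : ℚ_[p]) := invertibleOfNonzero two_ne_zero
  exact stmt_5_general hdim ⟨hsymm⟩ halt hinv
end

section
/- Let k be a field of characteristic ≠ 2, (V₀, (·,·)) a finite-dimensional vector space over k with a nondegenerate symmetric bilinear form, and fix τ ∈ k with τ ≠ 0. Consider the affine action of R = V₀ ⋊ SO(V₀) on V₀ × k given by (v,W)·(ξ,t) = (Wξ + 2τv, t − (Wξ, v) − τ(v,v)). Then: (i) the function M(ξ,t) = (ξ,ξ) + 4τt is invariant under this action; (ii) for every a ∈ k, the level set {(ξ,t) : (ξ,ξ) + 4τt = a} is a single orbit of this action. -/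
/-!
The translations `(v, 1)` already act transitively on each level set of `M`: taking
`v = (2τ)⁻¹(ξ' - ξ)` carries `ξ` to `ξ'`, and since `4τ` is invertible, the coordinate `t` is
determined by `ξ` and the invariant `M(ξ, t) = (ξ, ξ) + 4τt`.
-/

section AffineAction

variable {R V : Type*} [CommRing R] [AddCommGroup V] [Module R V]

/-- The affine action `(v, W) · (ξ, t) = (Wξ + 2τv, t − (Wξ, v) − τ(v, v))` on `V × R`. Here `W`
is any linear endomorphism; that it is an isometry is stated where it matters. -/
def affineAct (B : LinearMap.BilinForm R V) (τ : R) (v : V) (W : V →ₗ[R] V) (p : V × R) : V × R :=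
  (W p.1 + (2 * τ) • v, p.2 - B (W p.1) v - τ * B v v)

/-- The function `M(ξ, t) = (ξ, ξ) + 4τt` on `V × R`, whose level sets are to be the orbits of
`affineAct`. -/
def levelFunction (B : LinearMap.BilinForm R V) (τ : R) (p : V × R) : R :=
  B p.1 p.1 + 4 * τ * p.2

variable {B : LinearMap.BilinForm R V} {τ : R}

theorem levelFunction_affineAct (hB : B.IsSymm) (v : V) {W : V →ₗ[R] V}
    (hW : ∀ x, B (W x) (W x) = B x x) (p : V × R) :
    levelFunction B τ (affineAct B τ v W p) = levelFunction B τ p := by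
  simp only [levelFunction, affineAct, map_add, map_smul, LinearMap.add_apply,
    LinearMap.smul_apply, smul_eq_mul, hW, hB.eq v (W p.1)]
  ring

theorem eq_of_fst_eq_of_levelFunction_eq (hτ : IsUnit (4 * τ)) {p q : V × R}
    (hfst : p.1 = q.1) (hlevel : levelFunction B τ p = levelFunction B τ q) : p = q := by
  rw [levelFunction, levelFunction, hfst] at hlevel
  exact Prod.ext hfst (hτ.mul_left_cancel (add_left_cancel hlevel))

theorem exists_fst_affineAct_id_eq (hτ : IsUnit (2 * τ)) (p : V × R) (ξ : V) :
    ∃ v, (affineAct B τ v LinearMap.id p).1 = ξ := by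
  obtain ⟨u, hu⟩ := hτ
  refine ⟨u⁻¹ • (ξ - p.1), ?_⟩
  rw [affineAct, ← hu, ← Units.smul_def, smul_inv_smul, LinearMap.id_apply, add_sub_cancel]

theorem exists_affineAct_id_eq (hB : B.IsSymm) (hτ : IsUnit (2 * τ)) {p q : V × R}
    (hlevel : levelFunction B τ p = levelFunction B τ q) :
    ∃ v, affineAct B τ v LinearMap.id p = q := by
  have four_mul_isUnit : IsUnit (4 * τ) := by
    rw [show 4 * τ = 2 * (2 * τ) by ring]
    exact (isUnit_of_mul_isUnit_left hτ).mul hτ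
  obtain ⟨v, hv⟩ := exists_fst_affineAct_id_eq (B := B) hτ p q.1
  exact ⟨v, eq_of_fst_eq_of_levelFunction_eq four_mul_isUnit hv
    ((levelFunction_affineAct hB v (fun _ ↦ rfl) p).trans hlevel)⟩

theorem stmt_7_general (hB : B.IsSymm) (hτ : IsUnit (2 * τ)) :
    (∀ (v : V) (W : V →ₗ[R] V), (∀ x, B (W x) (W x) = B x x) →
      ∀ p, levelFunction B τ (affineAct B τ v W p) = levelFunction B τ p) ∧
    (∀ p q, levelFunction B τ p = levelFunction B τ q →
      ∃ v, affineAct B τ v LinearMap.id p = q) :=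
  ⟨fun v _ hW ↦ levelFunction_affineAct hB v hW, fun _ _ ↦ exists_affineAct_id_eq hB hτ⟩

end AffineAction

/-- For `τ ≠ 0`, the affine action `(v,W)·(ξ,t) = (Wξ + 2τv, t − (Wξ,v) − τ(v,v))` of
`R = V₀ ⋊ SO(V₀)` on `V₀ × k`: (i) preserves `M(ξ,t) = (ξ,ξ) + 4τt`; (ii) each level set
`{(ξ,t) : (ξ,ξ) + 4τt = a}` is a single orbit. -/
theorem stmt_7 {k V₀ : Type*} [Field k] [AddCommGroup V₀] [Module k V₀]
    [FiniteDimensional k V₀] (hchar : (2 : k) ≠ 0)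
    (B : LinearMap.BilinForm k V₀)
    (hsymm : ∀ x y, B x y = B y x)
    (hnd : ∀ x, (∀ y, B x y = 0) → x = 0)
    (τ : k) (hτ : τ ≠ 0) :
    -- (i) invariance of M(ξ,t) = (ξ,ξ) + 4τt under the affine action
    (∀ (v : V₀) (W : V₀ ≃ₗ[k] V₀),
      (∀ x y, B (W x) (W y) = B x y) → LinearMap.det W.toLinearMap = 1 →
      ∀ (ξ : V₀) (t : k),
        B (W ξ + (2 * τ) • v) (W ξ + (2 * τ) • v)
            + 4 * τ * (t - B (W ξ) v - τ * B v v) =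
          B ξ ξ + 4 * τ * t) ∧
    -- (ii) each level set is a single orbit
    (∀ (a : k) (ξ : V₀) (t : k) (ξ' : V₀) (t' : k),
      B ξ ξ + 4 * τ * t = a → B ξ' ξ' + 4 * τ * t' = a →
      ∃ (v : V₀) (W : V₀ ≃ₗ[k] V₀),
        (∀ x y, B (W x) (W y) = B x y) ∧ LinearMap.det W.toLinearMap = 1 ∧
        ((W ξ + (2 * τ) • v, t - B (W ξ) v - τ * B v v) : V₀ × k) = (ξ', t')) := by
  obtain ⟨invariant, transitive⟩ := stmt_7_general (B := B) ⟨hsymm⟩ (mul_ne_zero hchar hτ).isUnit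
  refine ⟨fun v W hW _ ξ t ↦ invariant v W.toLinearMap (fun x ↦ hW x x) (ξ, t), ?_⟩
  intro a ξ t ξ' t' h h'
  obtain ⟨v, hv⟩ := transitive (ξ, t) (ξ', t') (h.trans h'.symm)
  exact ⟨v, LinearEquiv.refl k V₀, fun _ _ ↦ rfl, LinearMap.det_id, hv⟩
end

section
/- Let k be a field of characteristic ≠ 2 and (V₀, (·,·)) a finite-dimensional vector space over k with a nondegenerate symmetric bilinear form, with dim V₀ ≥ 3. Consider the action of R = V₀ ⋊ SO(V₀) on V₀ × k given by (v,W)·(ξ,t) = (Wξ, t − (Wξ, v)). Then for every a ∈ k with a ≠ 0, the level set {(ξ,t) ∈ V₀ × k : (ξ,ξ) = a} is a single orbit of this action. -/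
/-!
If `(x, x) = (y, y) ≠ 0`, the parallelogram identity
`(x - y, x - y) + (x + y, x + y) = 4 (x, x)` shows that `x - y` or `x + y` is anisotropic.
If `x + y` is, reflecting in it and then in `y` takes `x` to `-y` and then to `y`. If `x - y` is,
reflecting in it takes `x` to `y`, and the determinant is corrected by a reflection fixing `y`; that
one exists because `y^⊥ ≠ 0` either contains an anisotropic vector or consists of vectors in the
radical of the form, and a reflection along a radical vector preserves the form.
Once `ξ` has been moved to `ξ'`, translation by a multiple of `ξ'` adjusts `t`.
-/

open Module LinearMap.IsReflective

section CommRing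

variable {R M : Type*} [CommRing R] [AddCommGroup M] [Module R M]

theorem det_reflection [Module.Free R M] [Module.Finite R M] {f : Dual R M} {x : M}
    (h : f x = 2) : LinearMap.det (reflection h).toLinearMap = -1 := by
  have reflection_eq_transvection :
      (reflection h).toLinearMap = LinearMap.transvection f (-x) := by
    ext y
    simp [reflection_apply, LinearMap.transvection.apply, sub_eq_add_neg]
  rw [reflection_eq_transvection, LinearMap.transvection.det, map_neg, h]
  norm_num

variable {B : LinearMap.BilinForm R M} {x y : M}

theorem isOrthogonal_reflection_of_apply_eq_zero (hB : B.IsSymm) (hx : B x = 0) {f : Dual R M}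
    (h : f x = 2) : B.IsOrthogonal (reflection h) := by
  intro y z
  simp [reflection_apply, hB.eq y x, hx]

theorem reflection_coroot_apply_of_apply_eq_zero (hx : B.IsReflective x) (hxy : B x y = 0) :
    reflection (coroot_apply_self B hx) y = y := by
  have coroot_eq_zero : coroot B hx y = 0 := hx.regular.left <| by simp [hxy]
  rw [reflection_apply, coroot_eq_zero, zero_smul, sub_zero]

theorem reflection_coroot_sub_apply (hB : B.IsSymm) (hxy : B x x = B y y)
    (h : B.IsReflective (x - y)) : reflection (coroot_apply_self B h) x = y := by
  have two_mul_apply : 2 * B (x - y) x = B (x - y) (x - y) := by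
    simp only [map_sub, LinearMap.sub_apply, hB.eq y x]
    linear_combination hxy
  have coroot_eq_one : coroot B h x = 1 := h.regular.left <| by
    simpa only [apply_self_mul_coroot_apply, mul_one] using two_mul_apply
  rw [reflection_apply, coroot_eq_one, one_smul, sub_sub_cancel]

theorem apply_sub_self_add_apply_add_self (B : LinearMap.BilinForm R M) (x y : M) :
    B (x - y) (x - y) + B (x + y) (x + y) = 2 * (B x x + B y y) := by
  simp only [map_sub, map_add, LinearMap.sub_apply, LinearMap.add_apply]
  ring

theorem exists_isOrthogonal_det_eq_one_of_comp {W₁ W₂ : M ≃ₗ[R] M}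
    (hW₁ : B.IsOrthogonal W₁) (hdet₁ : LinearMap.det W₁.toLinearMap = -1)
    (hW₂ : B.IsOrthogonal W₂) (hdet₂ : LinearMap.det W₂.toLinearMap = -1) (h : W₂ (W₁ x) = y) :
    ∃ W : M ≃ₗ[R] M, B.IsOrthogonal W ∧ LinearMap.det W.toLinearMap = 1 ∧ W x = y := by
  refine ⟨W₁.trans W₂, fun v w ↦ (hW₂ _ _).trans (hW₁ v w), ?_, h⟩
  rw [LinearEquiv.coe_trans, LinearMap.det_comp, hdet₁, hdet₂, neg_mul_neg, one_mul]

end CommRing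

section Field

variable {k V : Type*} [Field k] [AddCommGroup V] [Module k V]

theorem exists_ne_zero_apply_eq_zero (hdim : 2 ≤ finrank k V) (f : Dual k V) :
    ∃ w ≠ 0, f w = 0 := by
  have : FiniteDimensional k V := finite_of_finrank_pos (by lia)
  have ker_ne_bot : LinearMap.ker f ≠ ⊥ :=
    LinearMap.ker_ne_bot_of_finrank_lt (by rw [finrank_self]; lia)
  obtain ⟨w, hw, hw0⟩ := Submodule.exists_mem_ne_zero_of_ne_bot ker_ne_bot
  exact ⟨w, hw0, hw⟩

theorem exists_dual_apply_eq_zero_apply_eq {u w : V} (hw : w ∉ k ∙ u) (c : k) :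
    ∃ f : Dual k V, f u = 0 ∧ f w = c := by
  obtain ⟨f, hfw, hfu⟩ := Submodule.exists_le_ker_of_notMem hw
  refine ⟨(c / f w) • f, ?_, ?_⟩
  · have : f u = 0 := hfu (Submodule.mem_span_singleton_self u)
    simp [this]
  · simp [hfw]

theorem notMem_span_singleton_of_apply_eq_zero {f : Dual k V} {u w : V} (hu : f u ≠ 0)
    (hw : w ≠ 0) (hfw : f w = 0) : w ∉ k ∙ u := by
  intro hmem
  obtain ⟨c, rfl⟩ := Submodule.mem_span_singleton.mp hmem
  have : c = 0 := by simpa [hu] using hfw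
  simp [this] at hw

variable {B : LinearMap.BilinForm k V} {u x y : V}

theorem isReflective_of_apply_self_ne_zero (hu : B u u ≠ 0) : B.IsReflective u where
  regular := .of_ne_zero hu
  dvd_two_mul _ := hu.isUnit.dvd

theorem apply_eq_zero_of_forall_apply_self_eq_zero (h2 : (2 : k) ≠ 0) (hB : B.IsSymm)
    (hu : B u u ≠ 0) (h : ∀ w, B u w = 0 → B w w = 0) {w : V} (hw : B u w = 0) : B w = 0 := by
  have : Invertible (2 : k) := invertibleOfNonzero h2
  have restrict_eq_zero : B.restrict (LinearMap.ker (B u)) = 0 := by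
    by_contra hne
    obtain ⟨v, hv⟩ := LinearMap.BilinForm.exists_bilinForm_self_ne_zero hne
      ⟨fun v w ↦ hB.eq v w⟩
    exact hv (h v v.2)
  ext y
  set z := y - (B u y / B u u) • u with hz
  have huz : B u z = 0 := by simp [hz, hu]
  have hwz : B w z = 0 := congr($restrict_eq_zero ⟨w, hw⟩ ⟨z, huz⟩)
  simpa [hz, hB.eq w u, hw] using hwz

theorem exists_isOrthogonal_det_eq_neg_one_apply_eq_self (h2 : (2 : k) ≠ 0) (hB : B.IsSymm)
    (hdim : 2 ≤ finrank k V) (hu : B u u ≠ 0) :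
    ∃ W : V ≃ₗ[k] V, B.IsOrthogonal W ∧ LinearMap.det W.toLinearMap = -1 ∧ W u = u := by
  have : FiniteDimensional k V := finite_of_finrank_pos (by lia)
  by_cases! h : ∃ w, B u w = 0 ∧ B w w ≠ 0
  · obtain ⟨w, huw, hww⟩ := h
    have hw := isReflective_of_apply_self_ne_zero hww
    exact ⟨reflection (coroot_apply_self B hw),
      isOrthogonal_reflection B hw (LinearMap.BilinForm.isSymm_iff.mp hB), det_reflection _,
      reflection_coroot_apply_of_apply_eq_zero hw (by rw [hB.eq, huw])⟩
  · obtain ⟨w, hw, huw⟩ := exists_ne_zero_apply_eq_zero hdim (B u)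
    have hw_radical : B w = 0 := apply_eq_zero_of_forall_apply_self_eq_zero h2 hB hu h huw
    obtain ⟨f, hfu, hfw⟩ := exists_dual_apply_eq_zero_apply_eq
      (notMem_span_singleton_of_apply_eq_zero hu hw huw) 2
    exact ⟨reflection hfw, isOrthogonal_reflection_of_apply_eq_zero hB hw_radical hfw,
      det_reflection hfw, by simp [reflection_apply, hfu]⟩

theorem exists_isOrthogonal_det_eq_one_apply_eq (h2 : (2 : k) ≠ 0) (hB : B.IsSymm)
    (hdim : 2 ≤ finrank k V) (hxy : B x x = B y y) (hy : B y y ≠ 0) :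
    ∃ W : V ≃ₗ[k] V, B.IsOrthogonal W ∧ LinearMap.det W.toLinearMap = 1 ∧ W x = y := by
  have : FiniteDimensional k V := finite_of_finrank_pos (by lia)
  have hB' : LinearMap.IsSymm B := LinearMap.BilinForm.isSymm_iff.mp hB
  by_cases hsub : B (x - y) (x - y) = 0
  · have hadd : B (x - -y) (x - -y) ≠ 0 := by
      have parallelogram := apply_sub_self_add_apply_add_self B x y
      rw [hsub, zero_add, hxy, ← two_mul] at parallelogram
      rw [sub_neg_eq_add, parallelogram]
      exact mul_ne_zero h2 (mul_ne_zero h2 hy)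
    have reflective_add := isReflective_of_apply_self_ne_zero hadd
    have reflective_y := isReflective_of_apply_self_ne_zero hy
    refine exists_isOrthogonal_det_eq_one_of_comp
      (isOrthogonal_reflection B reflective_add hB') (det_reflection _)
      (isOrthogonal_reflection B reflective_y hB') (det_reflection _) ?_
    rw [reflection_coroot_sub_apply hB (by simpa using hxy), map_neg, reflection_apply_self,
      neg_neg]
  · have reflective_sub := isReflective_of_apply_self_ne_zero hsub
    obtain ⟨W, hW, hdet, hWy⟩ := exists_isOrthogonal_det_eq_neg_one_apply_eq_self h2 hB hdim hy
    refine exists_isOrthogonal_det_eq_one_of_comp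
      (isOrthogonal_reflection B reflective_sub hB') (det_reflection _) hW hdet ?_
    rw [reflection_coroot_sub_apply hB hxy, hWy]

end Field

theorem stmt_8_general {k V₀ : Type*} [Field k] [AddCommGroup V₀] [Module k V₀]
    (hchar : (2 : k) ≠ 0) (B : LinearMap.BilinForm k V₀) (hsymm : ∀ x y, B x y = B y x)
    (hdim : 2 ≤ Module.finrank k V₀) (a : k) (ha : a ≠ 0)
    (ξ : V₀) (t : k) (ξ' : V₀) (t' : k) (hξ : B ξ ξ = a) (hξ' : B ξ' ξ' = a) :
    ∃ (v : V₀) (W : V₀ ≃ₗ[k] V₀),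
      (∀ x y, B (W x) (W y) = B x y) ∧ LinearMap.det W.toLinearMap = 1 ∧
      ((W ξ, t - B (W ξ) v) : V₀ × k) = (ξ', t') := by
  obtain ⟨W, hW, hdet, hWξ⟩ := exists_isOrthogonal_det_eq_one_apply_eq hchar ⟨hsymm⟩ hdim
    (hξ.trans hξ'.symm) (hξ' ▸ ha)
  refine ⟨((t - t') / a) • ξ', W, hW, hdet, ?_⟩
  rw [hWξ, map_smul, hξ', smul_eq_mul, div_mul_cancel₀ _ ha, sub_sub_cancel]

/-- For the ordinary action `(v,W)·(ξ,t) = (Wξ, t − (Wξ,v))` of `R = V₀ ⋊ SO(V₀)` on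
`V₀ × k` with `dim V₀ ≥ 3`, each level set `{(ξ,t) : (ξ,ξ) = a}` with `a ≠ 0` is a single
orbit. -/
theorem stmt_8 {k V₀ : Type*} [Field k] [AddCommGroup V₀] [Module k V₀]
    [FiniteDimensional k V₀] (hchar : (2 : k) ≠ 0)
    (B : LinearMap.BilinForm k V₀)
    (hsymm : ∀ x y, B x y = B y x)
    (hnd : ∀ x, (∀ y, B x y = 0) → x = 0)
    (hdim : 3 ≤ Module.finrank k V₀)
    (a : k) (ha : a ≠ 0) :
    ∀ (ξ : V₀) (t : k) (ξ' : V₀) (t' : k), B ξ ξ = a → B ξ' ξ' = a →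
      ∃ (v : V₀) (W : V₀ ≃ₗ[k] V₀),
        (∀ x y, B (W x) (W y) = B x y) ∧ LinearMap.det W.toLinearMap = 1 ∧
        ((W ξ, t - B (W ξ) v) : V₀ × k) = (ξ', t') :=
  stmt_8_general hchar B hsymm (by lia) a ha
end

section
/- Let k be a field of characteristic ≠ 2 and (V, B) a finite-dimensional vector space over k with a nondegenerate symmetric bilinear form B, and let p ∈ V be a nonzero vector with B(p,p) = 0. Let A_p = {a ∈ V : a ≠ 0, B(a,a) = 0, B(p,a) ≠ 0}. If g ∈ SO(V) satisfies g(A_p) = A_p, then g stabilizes the line kp, i.e. g p ∈ kp. Thus the stabilizer of the line kp is the largest subgroup of SO(V) leaving A_p invariant. -/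
/-!
An isometry `g` maps `A_p` onto `A_{g p}`, so everything follows from the fact that, for null
vectors `p` and `q`, one has `A_p ⊆ A_q` if and only if `p ∈ kq`. Suppose `A_p ⊆ A_q`. Then
`B p q = 0`, as otherwise `q ∈ A_p ⊆ A_q`, although `B q q = 0`. If some `r` had `B q r = 0` but
`B p r ≠ 0`, then the line `r + kp`, on which `B q` vanishes and `B p` is a nonzero constant, would
contain a null vector, which lies in `A_p` but not in `A_q`. Hence `q^⊥ ⊆ p^⊥`, and nondegeneracy
gives `p ∈ kq`.
-/

section CommSemiring

variable {R V W : Type*} [CommSemiring R] [AddCommMonoid V] [Module R V] [AddCommMonoid W]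
  [Module R W]

/-- The set `A_p` of null vectors of `B` that are not orthogonal to `p`. -/
def nonorthogonalNullVectors (B : LinearMap.BilinForm R V) (p : V) : Set V :=
  {a | a ≠ 0 ∧ B a a = 0 ∧ B p a ≠ 0}

theorem mem_nonorthogonalNullVectors {B : LinearMap.BilinForm R V} {p a : V} :
    a ∈ nonorthogonalNullVectors B p ↔ B a a = 0 ∧ B p a ≠ 0 := by
  refine ⟨And.right, fun ha => ⟨?_, ha⟩⟩
  rintro rfl
  exact ha.2 (map_zero (B p))

theorem image_nonorthogonalNullVectors {B : LinearMap.BilinForm R V} {C : LinearMap.BilinForm R W}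
    (g : V ≃ₗ[R] W) (hg : ∀ x y, C (g x) (g y) = B x y) (p : V) :
    g '' nonorthogonalNullVectors B p = nonorthogonalNullVectors C (g p) := by
  ext a
  obtain ⟨b, rfl⟩ := g.surjective a
  simp only [g.injective.mem_set_image, mem_nonorthogonalNullVectors, hg]

theorem nonorthogonalNullVectors_subset_of_mem_span {B : LinearMap.BilinForm R V} {p q : V}
    (hpq : p ∈ Submodule.span R {q}) :
    nonorthogonalNullVectors B p ⊆ nonorthogonalNullVectors B q := by
  obtain ⟨c, rfl⟩ := Submodule.mem_span_singleton.1 hpq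
  intro a ha
  rw [mem_nonorthogonalNullVectors] at ha ⊢
  rw [map_smul, LinearMap.smul_apply] at ha
  exact ⟨ha.1, right_ne_zero_of_smul ha.2⟩

theorem apply_eq_zero_of_nonorthogonalNullVectors_subset
    {B : LinearMap.BilinForm R V} {p q : V} (hq : B q q = 0)
    (hpq : nonorthogonalNullVectors B p ⊆ nonorthogonalNullVectors B q) : B p q = 0 := by
  by_contra hne
  exact (mem_nonorthogonalNullVectors.1 (hpq (mem_nonorthogonalNullVectors.2 ⟨hq, hne⟩))).2 hq

end CommSemiring

section Field

variable {k V : Type*} [Field k] [AddCommGroup V] [Module k V] {B : LinearMap.BilinForm k V}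
  {p q : V}

theorem exists_null_add_smul (hchar : (2 : k) ≠ 0) (hB : B.IsSymm) (hp : B p p = 0) {r : V}
    (hpr : B p r ≠ 0) : ∃ t : k, B (r + t • p) (r + t • p) = 0 := by
  refine ⟨-B r r / (2 * B p r), ?_⟩
  simp only [map_add, map_smul, LinearMap.add_apply, LinearMap.smul_apply, smul_eq_mul, hp,
    hB.eq r p]
  field_simp
  ring

theorem ker_le_ker_of_nonorthogonalNullVectors_subset (hchar : (2 : k) ≠ 0) (hB : B.IsSymm)
    (hp : B p p = 0) (hq : B q q = 0)
    (hpq : nonorthogonalNullVectors B p ⊆ nonorthogonalNullVectors B q) :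
    LinearMap.ker (B q) ≤ LinearMap.ker (B p) := by
  intro r hqr
  rw [LinearMap.mem_ker] at hqr ⊢
  by_contra hpr
  have hqp : B q p = 0 := by
    rw [hB.eq, apply_eq_zero_of_nonorthogonalNullVectors_subset hq hpq]
  obtain ⟨t, hnull⟩ := exists_null_add_smul hchar hB hp hpr
  have hmem : r + t • p ∈ nonorthogonalNullVectors B p :=
    mem_nonorthogonalNullVectors.2 ⟨hnull, by simpa [hp] using hpr⟩
  exact (mem_nonorthogonalNullVectors.1 (hpq hmem)).2 (by simp [hqr, hqp])

theorem mem_span_singleton_of_ker_le_ker {W : Type*} [AddCommGroup W] [Module k W]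
    {C : V →ₗ[k] W →ₗ[k] k} (hC : C.SeparatingLeft)
    (hker : LinearMap.ker (C q) ≤ LinearMap.ker (C p)) : p ∈ Submodule.span k {q} := by
  have hspan : C p ∈ Submodule.span k {C q} := by
    simpa using mem_span_of_iInf_ker_le_ker (L := fun _ : Unit => C q) (by simpa using hker)
  obtain ⟨c, hc⟩ := Submodule.mem_span_singleton.1 hspan
  have hinj : Function.Injective C :=
    LinearMap.ker_eq_bot.1 (LinearMap.separatingLeft_iff_ker_eq_bot.1 hC)
  exact Submodule.mem_span_singleton.2 ⟨c, hinj (by rw [map_smul, hc])⟩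

theorem nonorthogonalNullVectors_subset_iff (hchar : (2 : k) ≠ 0) (hB : B.IsSymm)
    (hnd : B.SeparatingLeft) (hp : B p p = 0) (hq : B q q = 0) :
    nonorthogonalNullVectors B p ⊆ nonorthogonalNullVectors B q ↔ p ∈ Submodule.span k {q} :=
  ⟨fun hpq => mem_span_singleton_of_ker_le_ker hnd
    (ker_le_ker_of_nonorthogonalNullVectors_subset hchar hB hp hq hpq),
    nonorthogonalNullVectors_subset_of_mem_span⟩

theorem nonorthogonalNullVectors_eq_iff (hchar : (2 : k) ≠ 0) (hB : B.IsSymm)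
    (hnd : B.SeparatingLeft) (hp : B p p = 0) (hq : B q q = 0) :
    nonorthogonalNullVectors B p = nonorthogonalNullVectors B q ↔
      Submodule.span k {p} = Submodule.span k {q} := by
  rw [Set.Subset.antisymm_iff, le_antisymm_iff, Submodule.span_singleton_le_iff_mem,
    Submodule.span_singleton_le_iff_mem, nonorthogonalNullVectors_subset_iff hchar hB hnd hp hq,
    nonorthogonalNullVectors_subset_iff hchar hB hnd hq hp]

theorem span_singleton_eq_span_singleton_iff_mem (hp : p ≠ 0) (hq : q ≠ 0) :
    Submodule.span k {p} = Submodule.span k {q} ↔ p ∈ Submodule.span k {q} := by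
  rw [← Submodule.span_singleton_le_iff_mem,
    (nonzero_span_atom q hq).le_iff_eq (Submodule.span_singleton_eq_bot.not.2 hp)]

theorem stmt_15_general (hchar : (2 : k) ≠ 0) (hB : B.IsSymm) (hnd : B.SeparatingLeft)
    (hp : p ≠ 0) (hpnull : B p p = 0) (g : V ≃ₗ[k] V) (hg : ∀ x y, B (g x) (g y) = B x y) :
    g '' nonorthogonalNullVectors B p = nonorthogonalNullVectors B p ↔
      g p ∈ Submodule.span k {p} := by
  have hgpnull : B (g p) (g p) = 0 := by rw [hg, hpnull]
  rw [image_nonorthogonalNullVectors g hg,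
    nonorthogonalNullVectors_eq_iff hchar hB hnd hgpnull hpnull,
    span_singleton_eq_span_singleton_iff_mem (g.map_ne_zero_iff.2 hp) hp]

end Field

/-- Let `p` be a null vector of a nondegenerate symmetric bilinear form `B` (char ≠ 2) and
`A_p = {a : a ≠ 0, B(a,a) = 0, B(p,a) ≠ 0}`. An element `g ∈ SO(V)` satisfies
`g(A_p) = A_p` if and only if `g` stabilizes the line `kp`, i.e. `g p ∈ kp`; thus the
stabilizer of the line `kp` is the largest subgroup of `SO(V)` leaving `A_p` invariant. -/
theorem stmt_15 {k V : Type*} [Field k] [AddCommGroup V] [Module k V]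
    [FiniteDimensional k V] (hchar : (2 : k) ≠ 0)
    (B : LinearMap.BilinForm k V)
    (hsymm : ∀ x y, B x y = B y x)
    (hnd : ∀ x, (∀ y, B x y = 0) → x = 0)
    (p : V) (hp : p ≠ 0) (hpnull : B p p = 0)
    (g : V ≃ₗ[k] V) (hg : ∀ x y, B (g x) (g y) = B x y)
    (hgdet : LinearMap.det g.toLinearMap = 1) :
    (⇑g '' {a : V | a ≠ 0 ∧ B a a = 0 ∧ B p a ≠ 0} =
        {a : V | a ≠ 0 ∧ B a a = 0 ∧ B p a ≠ 0}) ↔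
      g p ∈ Submodule.span k {p} :=
  stmt_15_general hchar ⟨hsymm⟩ hnd hp hpnull g hg
end

section
/- Let L and C be groups and let M be an abelian group equipped with an action of the direct product L × C by automorphisms. Suppose that (i) every 1-cocycle of L with coefficients in M (for the restricted action) is a coboundary, and (ii) the only element of M fixed by every element of L is 0. Then every 1-cocycle of L × C with coefficients in M is a coboundary; i.e. H¹(L × C, M) = 0. -/
/-!
The conclusion holds for any group `G` in place of `L × C`, as long as the image `N` of `L` in `G`
is normal: this is the injectivity of restriction `H¹(G, M) → H¹(N, M)` when `M` has no nonzero
`N`-invariants. Subtracting a coboundary from a cocycle of `G`, we may assume that it vanishes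
on `N`. By normality its values are then fixed by `N`, so it is zero.
-/

open groupCohomology

theorem isCocycle₁_sub_smul_sub {G M : Type*} [Monoid G] [AddCommGroup M] [DistribMulAction G M]
    {F : G → M} (hF : IsCocycle₁ F) (m : M) : IsCocycle₁ fun g ↦ F g - (g • m - m) := by
  intro g h
  simp only [hF g h, mul_smul, smul_sub]
  abel

section NormalSubgroup

variable {G M : Type*} [Group G] [AddCommGroup M] [DistribMulAction G M]
  {N : Subgroup G} [N.Normal] {F : G → M}

theorem smul_eq_of_isCocycle₁_of_eq_zero_on_normal (hF : IsCocycle₁ F) (hN : ∀ n ∈ N, F n = 0)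
    {n : G} (hn : n ∈ N) (g : G) : n • F g = F g := by
  have hconj : F (g⁻¹ * n * g) = 0 := hN _ (Subgroup.Normal.conj_mem' ‹_› n hn g)
  calc
    n • F g = F (n * g) := by rw [hF, hN n hn, add_zero]
    _ = F (g * (g⁻¹ * n * g)) := by group
    _ = F g := by rw [hF, hconj, smul_zero, zero_add]

theorem eq_smul_sub_of_isCocycle₁_of_eq_on_normal (hF : IsCocycle₁ F)
    (hfix : ∀ m : M, (∀ n ∈ N, n • m = m) → m = 0) {m : M} (hN : ∀ n ∈ N, F n = n • m - m)
    (g : G) : F g = g • m - m := by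
  have hzero : ∀ n ∈ N, F n - (n • m - m) = 0 := fun n hn ↦ sub_eq_zero.mpr (hN n hn)
  exact sub_eq_zero.mp <| hfix _ fun n hn ↦
    smul_eq_of_isCocycle₁_of_eq_zero_on_normal (isCocycle₁_sub_smul_sub hF m) hzero hn g

end NormalSubgroup

theorem range_inl_eq_ker_snd (L C : Type*) [Group L] [Group C] :
    (MonoidHom.inl L C).range = (MonoidHom.snd L C).ker := by
  ext ⟨g, c⟩
  simp [-MonoidHom.ker_snd, MonoidHom.mem_ker, eq_comm]

instance normal_range_inl (L C : Type*) [Group L] [Group C] :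
    (MonoidHom.inl L C).range.Normal :=
  range_inl_eq_ker_snd L C ▸ (MonoidHom.snd L C).normal_ker

theorem stmt_17_general {L G M : Type*} [Group L] [Group G] [AddCommGroup M]
    [DistribMulAction G M] (ι : L →* G) [ι.range.Normal]
    (h1 : ∀ F : L → M, (∀ g g' : L, F (g * g') = F g + ι g • F g') →
      ∃ lam : M, ∀ g : L, F g = ι g • lam - lam)
    (h2 : ∀ m : M, (∀ g : L, ι g • m = m) → m = 0)
    (F : G → M) (hF : ∀ x y : G, F (x * y) = F x + x • F y) :
    ∃ lam : M, ∀ x : G, F x = x • lam - lam := by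
  have hcocycle : IsCocycle₁ F := fun x y ↦ (hF x y).trans (add_comm _ _)
  obtain ⟨lam, hlam⟩ := h1 (F ∘ ι) fun g g' ↦ by simp only [Function.comp_apply, map_mul, hF]
  have hfix : ∀ m : M, (∀ n ∈ ι.range, n • m = m) → m = 0 :=
    fun m hm ↦ h2 m fun g ↦ hm _ ⟨g, rfl⟩
  have hrange : ∀ n ∈ ι.range, F n = n • lam - lam := by
    rintro _ ⟨g, rfl⟩
    exact hlam g
  exact ⟨lam, eq_smul_sub_of_isCocycle₁_of_eq_on_normal hcocycle hfix hrange⟩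

/-- If every 1-cocycle of `L` with coefficients in `M` (for the action restricted from
`L × C`) is a coboundary, and `0` is the only element of `M` fixed by every element of `L`,
then every 1-cocycle of `L × C` with coefficients in `M` is a coboundary, i.e.
`H¹(L × C, M) = 0`. -/
theorem stmt_17 {L C M : Type*} [Group L] [Group C] [AddCommGroup M]
    [DistribMulAction (L × C) M]
    (h1 : ∀ F : L → M,
      (∀ g g' : L, F (g * g') = F g + ((g, (1 : C)) : L × C) • F g') →
      ∃ lam : M, ∀ g : L, F g = ((g, (1 : C)) : L × C) • lam - lam)
    (h2 : ∀ m : M, (∀ g : L, ((g, (1 : C)) : L × C) • m = m) → m = 0) :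
    ∀ F : L × C → M, (∀ x y : L × C, F (x * y) = F x + x • F y) →
      ∃ lam : M, ∀ x : L × C, F x = x • lam - lam :=
  stmt_17_general (MonoidHom.inl L C) h1 h2
end

section
/- Let p be a prime, n ≥ 3, and let B be a nondegenerate symmetric bilinear form on V = ℚ_p^n with quadratic form Q(x) = B(x,x). Let x ∈ V with Q(x) = a ≠ 0. Then the orbit of x under the group SO(V) × ℚ_p^× acting by (g,c)·v = c·(g v) equals {y ∈ V : Q(y) ∈ a·(ℚ_p^×)²} and is an open subset of V. -/
/-!
If `Q x = Q y ≠ 0` then, as `2 ≠ 0`, the parallelogram identity `Q (x - y) + Q (x + y) = 4 Q x`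
shows that one of `x - y`, `x + y` is anisotropic. The reflection in it takes `x` to `y` or to `-y`,
and a further reflection in `y` changes this sign and makes the determinant `1`. Hence an element of
`SO(V)` takes `x` to `y` or `-y`, and the scalar `-1` absorbs the sign. Openness holds because
`c ↦ a * c ^ 2` has nonzero derivative at every `c ≠ 0`, so that the inverse function theorem makes
`a * (𝕜ˣ)²` open, and `Q` is continuous.
-/

theorem det_reflection_s18 {R M : Type*} [CommRing R] [AddCommGroup M] [Module R M]
    [Module.Free R M] [Module.Finite R M] {f : Module.Dual R M} {v : M} (hf : f v = 2) :
    LinearMap.det (Module.reflection hf).toLinearMap = -1 := by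
  have reflection_eq_transvection :
      (Module.reflection hf).toLinearMap = LinearMap.transvection (-f) v := by
    ext u
    simp [Module.reflection_apply, LinearMap.transvection.apply, sub_eq_add_neg]
  rw [reflection_eq_transvection, LinearMap.transvection.det, LinearMap.neg_apply, hf]
  norm_num

section CommRing

variable {R M : Type*} [CommRing R] [AddCommGroup M] [Module R M]
  {B : LinearMap.BilinForm R M} {x y : M}

theorem reflection_coroot_sub_apply_s18 (hB : B.IsSymm) (hxy : B x x = B y y)
    (hv : LinearMap.IsReflective B (x - y)) :
    Module.reflection (hv.coroot_apply_self B) x = y := by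
  have coroot_apply : hv.coroot B x = 1 := by
    apply hv.regular.left
    calc B (x - y) (x - y) * hv.coroot B x
      _ = 2 * B (x - y) x := hv.apply_self_mul_coroot_apply B
      _ = B (x - y) (x - y) * 1 := by
        simp only [map_sub, LinearMap.sub_apply, hB.eq x y, ← hxy]
        ring
  rw [Module.reflection_apply, coroot_apply, one_smul, sub_sub_cancel]

theorem exists_isOrthogonal_det_eq_one_apply_eq_neg [Module.Free R M] [Module.Finite R M]
    (hB : B.IsSymm) (hxy : B x x = B y y) (hv : LinearMap.IsReflective B (x - y))
    (hy : LinearMap.IsReflective B y) :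
    ∃ g : M ≃ₗ[R] M, B.IsOrthogonal g ∧ LinearMap.det g.toLinearMap = 1 ∧ g x = -y := by
  refine ⟨Module.reflection (hv.coroot_apply_self B) ≪≫ₗ
    Module.reflection (hy.coroot_apply_self B), fun u w => ?_, ?_, ?_⟩
  · exact (hy.isOrthogonal_reflection B ⟨hB.eq⟩ _ _).trans
      (hv.isOrthogonal_reflection B ⟨hB.eq⟩ u w)
  · rw [LinearEquiv.coe_trans, LinearMap.det_comp, det_reflection_s18, det_reflection_s18, neg_mul_neg,
      one_mul]
  · rw [LinearEquiv.trans_apply, reflection_coroot_sub_apply_s18 hB hxy hv,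
      Module.reflection_apply_self]

end CommRing

section Field

variable {K V : Type*} [Field K] [AddCommGroup V] [Module K V] {B : LinearMap.BilinForm K V}

theorem isReflective_of_apply_self_ne_zero_s18 {v : V} (hv : B v v ≠ 0) :
    LinearMap.IsReflective B v where
  regular := .of_ne_zero hv
  dvd_two_mul _ := hv.isUnit.dvd

theorem apply_sub_self_ne_zero_or_apply_add_self_ne_zero [NeZero (2 : K)] {x y : V}
    (hx : B x x ≠ 0) (hxy : B x x = B y y) :
    B (x - y) (x - y) ≠ 0 ∨ B (x + y) (x + y) ≠ 0 := by
  by_contra! ⟨hsub, hadd⟩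
  have parallelogram : B (x - y) (x - y) + B (x + y) (x + y) = 2 * (2 * B x x) := by
    simp only [map_add, map_sub, LinearMap.add_apply, LinearMap.sub_apply, ← hxy]
    ring
  rw [hsub, hadd, add_zero, eq_comm] at parallelogram
  simp [two_ne_zero, hx] at parallelogram

variable [FiniteDimensional K V] [NeZero (2 : K)]

theorem exists_isOrthogonal_det_eq_one_apply_eq_or_eq_neg (hB : B.IsSymm) {x y : V}
    (hx : B x x ≠ 0) (hxy : B x x = B y y) :
    ∃ g : V ≃ₗ[K] V, B.IsOrthogonal g ∧ LinearMap.det g.toLinearMap = 1 ∧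
      (g x = y ∨ g x = -y) := by
  have hy : B y y ≠ 0 := hxy ▸ hx
  rcases apply_sub_self_ne_zero_or_apply_add_self_ne_zero hx hxy with hsub | hadd
  · obtain ⟨g, hg, hdet, hgx⟩ := exists_isOrthogonal_det_eq_one_apply_eq_neg hB hxy
      (isReflective_of_apply_self_ne_zero_s18 hsub) (isReflective_of_apply_self_ne_zero_s18 hy)
    exact ⟨g, hg, hdet, .inr hgx⟩
  · obtain ⟨g, hg, hdet, hgx⟩ := exists_isOrthogonal_det_eq_one_apply_eq_neg (y := -y) hB
      (by simpa using hxy) (isReflective_of_apply_self_ne_zero_s18 (by simpa using hadd))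
      (isReflective_of_apply_self_ne_zero_s18 (by simpa using hy))
    exact ⟨g, hg, hdet, .inl (by simpa using hgx)⟩

theorem specialOrthogonal_smul_orbit_eq (hB : B.IsSymm) {x : V} (hx : B x x ≠ 0) :
    {y : V | ∃ (g : V ≃ₗ[K] V) (c : K),
        B.IsOrthogonal g ∧ LinearMap.det g.toLinearMap = 1 ∧ c ≠ 0 ∧ y = c • g x} =
      {y : V | ∃ c : K, c ≠ 0 ∧ B y y = B x x * c ^ 2} := by
  ext y
  constructor
  · rintro ⟨g, c, hg, -, hc, rfl⟩
    refine ⟨c, hc, ?_⟩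
    simp only [map_smul, LinearMap.smul_apply, smul_eq_mul, hg x x]
    ring
  · rintro ⟨c, hc, hy⟩
    have hxy : B x x = B (c⁻¹ • y) (c⁻¹ • y) := by
      simp only [map_smul, LinearMap.smul_apply, smul_eq_mul, hy]
      field_simp
    obtain ⟨g, hg, hdet, hgx | hgx⟩ :=
      exists_isOrthogonal_det_eq_one_apply_eq_or_eq_neg hB hx hxy
    · exact ⟨g, c, hg, hdet, hc, by rw [hgx, smul_inv_smul₀ hc]⟩
    · exact ⟨g, -c, hg, hdet, neg_ne_zero.mpr hc, by
        rw [hgx, neg_smul_neg, smul_inv_smul₀ hc]⟩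

end Field

section Topology

variable {𝕜 : Type*} [NontriviallyNormedField 𝕜] [CompleteSpace 𝕜]

open Filter in
theorem isOpen_setOfPred_eq_mul_pow {a : 𝕜} (ha : a ≠ 0) {m : ℕ} (hm : (m : 𝕜) ≠ 0) :
    IsOpen {t : 𝕜 | ∃ c : 𝕜, c ≠ 0 ∧ t = a * c ^ m} := by
  rw [isOpen_iff_mem_nhds]
  rintro _ ⟨c, hc, rfl⟩
  have hasStrictDerivAt : HasStrictDerivAt (fun d : 𝕜 => a * d ^ m) (a * (m * c ^ (m - 1))) c :=
    (hasStrictDerivAt_pow m c).const_mul a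
  have deriv_ne_zero : a * (m * c ^ (m - 1)) ≠ 0 :=
    mul_ne_zero ha (mul_ne_zero hm (pow_ne_zero _ hc))
  rw [← hasStrictDerivAt.map_nhds_eq deriv_ne_zero, mem_map]
  filter_upwards [isOpen_ne.mem_nhds hc] with d hd using ⟨d, hd, rfl⟩

theorem continuous_uncurry_of_finiteDimensional {E F G : Type*}
    [AddCommGroup E] [Module 𝕜 E] [TopologicalSpace E] [IsTopologicalAddGroup E]
    [ContinuousSMul 𝕜 E] [T2Space E] [FiniteDimensional 𝕜 E]
    [AddCommGroup F] [Module 𝕜 F] [TopologicalSpace F] [IsTopologicalAddGroup F]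
    [ContinuousSMul 𝕜 F] [T2Space F] [FiniteDimensional 𝕜 F]
    [AddCommGroup G] [Module 𝕜 G] [TopologicalSpace G] [IsTopologicalAddGroup G]
    [ContinuousSMul 𝕜 G] (f : E →ₗ[𝕜] F →ₗ[𝕜] G) :
    Continuous fun z : E × F => f z.1 z.2 := by
  let b := Module.finBasis 𝕜 E
  have expand : ∀ z : E × F, f z.1 z.2 = ∑ i, b.coord i z.1 • f (b i) z.2 := fun z => by
    conv_lhs => rw [← b.sum_repr z.1]
    simp only [map_sum, map_smul, LinearMap.sum_apply, LinearMap.smul_apply, b.coord_apply]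
  simp only [expand]
  exact continuous_finsetSum _ fun i _ =>
    ((b.coord i).continuous_of_finiteDimensional.comp continuous_fst).smul
      ((f (b i)).continuous_of_finiteDimensional.comp continuous_snd)

end Topology

theorem stmt_18_general {𝕜 V : Type*} [NontriviallyNormedField 𝕜] [CompleteSpace 𝕜]
    [NeZero (2 : 𝕜)] [AddCommGroup V] [Module 𝕜 V] [FiniteDimensional 𝕜 V] [TopologicalSpace V]
    [IsTopologicalAddGroup V] [ContinuousSMul 𝕜 V] [T2Space V]
    (B : LinearMap.BilinForm 𝕜 V) (hB : B.IsSymm) (x : V) (hx : B x x ≠ 0) :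
    ({y : V | ∃ (g : V ≃ₗ[𝕜] V) (c : 𝕜),
          B.IsOrthogonal g ∧ LinearMap.det g.toLinearMap = 1 ∧ c ≠ 0 ∧ y = c • g x} =
      {y : V | ∃ c : 𝕜, c ≠ 0 ∧ B y y = B x x * c ^ 2}) ∧
    IsOpen {y : V | ∃ c : 𝕜, c ≠ 0 ∧ B y y = B x x * c ^ 2} :=
  ⟨specialOrthogonal_smul_orbit_eq hB hx,
    (isOpen_setOfPred_eq_mul_pow hx (by exact_mod_cast two_ne_zero)).preimage
      ((continuous_uncurry_of_finiteDimensional B).comp (continuous_id.prodMk continuous_id))⟩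

/-- For a nondegenerate symmetric bilinear form `B` on `V = ℚ_p^n`, `n ≥ 3`, and `x` with
`Q(x) = B(x,x) = a ≠ 0`, the orbit of `x` under `SO(V) × ℚ_p^×` (acting by `(g,c)·v = c•(gv)`)
equals `{y : Q(y) ∈ a·(ℚ_p^×)²}`, and this set is open in `V`. -/
theorem stmt_18 (p : ℕ) [Fact p.Prime] (n : ℕ) (hn : 3 ≤ n)
    (B : LinearMap.BilinForm ℚ_[p] (Fin n → ℚ_[p]))
    (hsymm : ∀ x y, B x y = B y x)
    (hnd : ∀ x, (∀ y, B x y = 0) → x = 0)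
    (x : Fin n → ℚ_[p]) (a : ℚ_[p]) (ha : a ≠ 0) (hx : B x x = a) :
    ({y : Fin n → ℚ_[p] |
        ∃ (g : (Fin n → ℚ_[p]) ≃ₗ[ℚ_[p]] (Fin n → ℚ_[p])) (c : ℚ_[p]),
          (∀ u v, B (g u) (g v) = B u v) ∧ LinearMap.det g.toLinearMap = 1 ∧
          c ≠ 0 ∧ y = c • g x} =
      {y : Fin n → ℚ_[p] | ∃ c : ℚ_[p], c ≠ 0 ∧ B y y = a * c ^ 2}) ∧
    IsOpen {y : Fin n → ℚ_[p] | ∃ c : ℚ_[p], c ≠ 0 ∧ B y y = a * c ^ 2} := by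
  subst hx
  exact stmt_18_general B ⟨hsymm⟩ x ha
end
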